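/- arXiv:1908.04937 — 2 statements merged into one kernel-verified Lean document; each statement's English description precedes it below -/
import Mathlib

section
/- Two strings P[1..m] and S[1..m] over a linearly ordered alphabet have the same Cartesian trees, i.e. CT(P[1..m]) = CT(S[1..m]), if and only if S[GP_P(i)] ⪯ S[i] for all 1 ≤ i ≤ m. (Theorem 3 of the paper: global-parent verification is correct.) -/
/-!
The global parent `GP P i` is the parent of `i` in `CT P` (and `i` itself at the root). Two
properties of it, proved in `GP_spec` directly from the prefix representations, suffice: it is the
`≺`-minimum of the segment of positions joining it to `i`, and every segment from `i` to a
`≺`-smaller position contains a position `≼` the global parent, which then differs from `i`.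

If the trees agree and `a` is, in `P`, the `≺`-minimum of the segment from `b` to `a`, then this can
be read off the tree, and `S[a] ≼ S[b]` follows (`key_le_of_CTAux_eq`); apply this with
`a = GP P i` and `b = i`.

Conversely, suppose `S[GP P i] ≼ S[i]` for all `i`. The set `F` of positions of a subtree of `CT P`
is an interval containing the global parent of each of its non-root members. So the
`≺`-minimum of `F` with respect to `S` must be the root of the subtree, since otherwise its global
parent would be smaller. Thus both trees have the same root on `F`, and the condition on `F` passes
to the two parts into which the root splits it (`CTAux_eq_of_GP`).
-/

namespace CTM

variable {α : Type*} [LinearOrder α] {n : ℕ}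

/-- `S[i] ≺ S[j]`: strict order on positions, values compared first, ties broken
toward the smaller index. -/
def prec (S : Fin n → α) (i j : Fin n) : Prop :=
  S i < S j ∨ (S i = S j ∧ i < j)

instance (S : Fin n → α) (i j : Fin n) : Decidable (prec S i j) :=
  inferInstanceAs (Decidable (_ ∨ _))

/-- `S[i] ⪯ S[j]`. -/
def preceq (S : Fin n → α) (i j : Fin n) : Prop :=
  i = j ∨ prec S i j

/-- The set `{j : j < i and S[j] ≺ S[i]}`. -/
def PPset (S : Fin n → α) (i : Fin n) : Finset (Fin n) :=
  Finset.univ.filter (fun j => j < i ∧ prec S j i)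

/-- Prefix-parent representation. -/
def PP (S : Fin n → α) (i : Fin n) : Fin n :=
  if h : (PPset S i).Nonempty then (PPset S i).max' h else i

lemma PP_le (S : Fin n → α) (i : Fin n) : PP S i ≤ i := by
  unfold PP
  split
  · next h =>
      have hm := (PPset S i).max'_mem h
      simp only [PPset, Finset.mem_filter] at hm
      exact le_of_lt hm.2.1
  · exact le_refl i

/-- The ≺-minimum position of a nonempty finite set of positions. -/
noncomputable def minPos (S : Fin n → α) (F : Finset (Fin n)) (h : F.Nonempty) : Fin n :=
  (F.exists_min_image (fun j => toLex (S j, j)) h).choose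

lemma minPos_mem (S : Fin n → α) (F : Finset (Fin n)) (h : F.Nonempty) :
    minPos S F h ∈ F :=
  (F.exists_min_image (fun j => toLex (S j, j)) h).choose_spec.1

/-- Prefix-child representation (0-indexed: position `0` is the first position). -/
noncomputable def PC (S : Fin n → α) (i : Fin n) : Fin n :=
  if h0 : i.val = 0 then i
  else if h1 : PP S i = i then
    minPos S (Finset.univ.filter (fun j => j < i))
      ⟨⟨0, i.pos⟩, Finset.mem_filter.mpr ⟨Finset.mem_univ _, by
        simp only [Fin.lt_def]; omega⟩⟩
  else if _h2 : (PP S i).val + 1 = i.val then i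
  else
    minPos S (Finset.univ.filter (fun j => PP S i < j ∧ j < i))
      ⟨⟨(PP S i).val + 1, by
          have h3 : (PP S i).val < i.val := Fin.lt_def.mp (lt_of_le_of_ne (PP_le S i) h1)
          have h4 := i.isLt
          omega⟩,
        Finset.mem_filter.mpr ⟨Finset.mem_univ _, by
          have h3 : (PP S i).val < i.val := Fin.lt_def.mp (lt_of_le_of_ne (PP_le S i) h1)
          constructor <;> simp only [Fin.lt_def] <;> omega⟩⟩

/-- Global-parent representation. -/
noncomputable def GP (S : Fin n → α) (i : Fin n) : Fin n :=
  if h : ∃ j, i < j ∧ PC S j = i then h.choose else PP S i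

/-- Binary trees whose nodes are positions of a string of length `n`. -/
inductive PosTree (n : ℕ) where
  | nil : PosTree n
  | node : Fin n → PosTree n → PosTree n → PosTree n

/-- The Cartesian tree of the restriction of `S` to a finite set of positions. -/
noncomputable def CTAux (S : Fin n → α) (F : Finset (Fin n)) : PosTree n :=
  if h : F.Nonempty then
    PosTree.node (minPos S F h)
      (CTAux S (F.filter (fun j => j < minPos S F h)))
      (CTAux S (F.filter (fun j => minPos S F h < j)))
  else PosTree.nil
termination_by F.card
decreasing_by
  · exact Finset.card_lt_card
      (Finset.filter_ssubset.mpr ⟨minPos S F h, minPos_mem S F h, by simp⟩)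
  · exact Finset.card_lt_card
      (Finset.filter_ssubset.mpr ⟨minPos S F h, minPos_mem S F h, by simp⟩)

/-- The Cartesian tree of a string, as a binary tree on positions. -/
noncomputable def CT (S : Fin n → α) : PosTree n :=
  CTAux S Finset.univ

/-- Parent-distance representation. -/
def PD (S : Fin n → α) (i : Fin n) : ℕ :=
  if h : (PPset S i).Nonempty then i.val - ((PPset S i).max' h).val else 0


/-- The position `i` of `S` as an element of the lexicographic order on pairs (value, index), so
that `≺` on positions becomes the order of an injective family in a linear order. -/
def key (S : Fin n → α) (i : Fin n) : α ×ₗ Fin n := toLex (S i, i)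

set_option linter.unusedSectionVars false in
lemma key_inj (S : Fin n → α) {i j : Fin n} : key S i = key S j ↔ i = j := by
  constructor
  · intro h
    exact (Prod.ext_iff.mp (toLex.injective h)).2
  · rintro rfl; rfl

lemma prec_iff (S : Fin n → α) (i j : Fin n) : prec S i j ↔ key S i < key S j := by
  simp [prec, key, Prod.Lex.toLex_lt_toLex]

lemma preceq_iff (S : Fin n → α) (i j : Fin n) : preceq S i j ↔ key S i ≤ key S j := by
  rw [preceq, prec_iff, le_iff_eq_or_lt, key_inj]

lemma minPos_le (S : Fin n → α) (F : Finset (Fin n)) (h : F.Nonempty) {k : Fin n} (hk : k ∈ F) :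
    key S (minPos S F h) ≤ key S k :=
  (F.exists_min_image (fun j => toLex (S j, j)) h).choose_spec.2 k hk

lemma minPos_eq_iff (S : Fin n → α) (F : Finset (Fin n)) (h : F.Nonempty) (i : Fin n) :
    minPos S F h = i ↔ i ∈ F ∧ ∀ k ∈ F, key S i ≤ key S k := by
  constructor
  · rintro rfl
    exact ⟨minPos_mem S F h, fun k hk => minPos_le S F h hk⟩
  · rintro ⟨hi, hm⟩
    exact (key_inj S).mp (le_antisymm (minPos_le S F h hi) (hm _ (minPos_mem S F h)))

/-- Either no position before `i` is `≺`-smaller and `PP S i = i`, or `PP S i` is the last one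
that is. -/
lemma PP_spec (S : Fin n → α) (i : Fin n) :
    (PP S i = i ∧ ∀ k < i, key S i < key S k) ∨
    (PP S i < i ∧ key S (PP S i) < key S i ∧ ∀ k, PP S i < k → k < i → key S i < key S k) := by
  have hlt : ∀ k < i, ¬ key S k < key S i → key S i < key S k := fun k hk hn =>
    lt_of_le_of_ne (not_lt.mp hn) (fun e => hk.ne ((key_inj S).mp e).symm)
  unfold PP
  split_ifs with h
  · right
    have hm : (PPset S i).max' h < i ∧ key S ((PPset S i).max' h) < key S i := by
      have hm := Finset.mem_filter.mp ((PPset S i).max'_mem h)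
      exact ⟨hm.2.1, (prec_iff S _ _).mp hm.2.2⟩
    refine ⟨hm.1, hm.2, fun k hk hki => hlt k hki fun hn => ?_⟩
    have : k ∈ PPset S i := by simp [PPset, prec_iff, hki, hn]
    exact absurd ((PPset S i).le_max' k this) (not_le.mpr hk)
  · refine Or.inl ⟨rfl, fun k hk => hlt k hk fun hn => h ⟨k, ?_⟩⟩
    simp [PPset, prec_iff, hk, hn]

/-- For `i < j`, the prefix child of `j` is `i` exactly when `i` is the `≺`-minimum of the maximal
block of positions ending just before `j` and containing nothing `≺`-smaller than `j`. -/
lemma PC_eq_iff (S : Fin n → α) {i j : Fin n} (hij : i < j) :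
    PC S j = i ↔ (∀ l, i ≤ l → l < j → key S j < key S l) ∧
      ∀ k < j, (∀ l, k ≤ l → l < j → key S j < key S l) → key S i ≤ key S k := by
  have hblock : ∀ k < j, (∀ l, k ≤ l → l < j → key S j < key S l) ↔ (PP S j = j ∨ PP S j < k) := by
    intro k hk
    rcases PP_spec S j with ⟨h1, h2⟩ | ⟨h1, h2, h3⟩
    · simp only [h1, true_or, iff_true]
      exact fun l _ hl => h2 l hl
    · constructor
      · intro h
        refine Or.inr (not_le.mp fun hle => ?_)
        exact lt_asymm h2 (h _ hle h1)
      · rintro (h | h) l hkl hlj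
        · exact absurd h h1.ne
        · exact h3 l (h.trans_le hkl) hlj
  rw [hblock i hij]
  have : (∀ k < j, (∀ l, k ≤ l → l < j → key S j < key S l) → key S i ≤ key S k) ↔
      ∀ k < j, (PP S j = j ∨ PP S j < k) → key S i ≤ key S k :=
    forall₂_congr fun k hk => by rw [hblock k hk]
  rw [this]
  unfold PC
  split_ifs with h0 h1 h2
  · rw [Fin.lt_def] at hij; omega
  · refine (minPos_eq_iff S _ _ i).trans ?_
    simp [h1, hij]
  · -- the block is empty here, so neither side can hold for an `i < j`
    constructor
    · rintro rfl; exact absurd hij (lt_irrefl _)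
    · rintro ⟨h | h, -⟩
      · exact absurd h h1
      · rw [Fin.lt_def] at hij h; omega
  · refine (minPos_eq_iff S _ _ i).trans ?_
    simp only [Finset.mem_filter, Finset.mem_univ, true_and, h1, false_or, hij, and_true]
    exact and_congr_right fun _ => ⟨fun h k hk hp => h k ⟨hp, hk⟩, fun h k hk => h k hk.2 hk.1⟩

/-- The global parent of `i` is the `≺`-minimum of the segment joining it to `i`. Unless `i` is the
global `≺`-minimum, it differs from `i`, and it is `≺`-large among such positions: every segment
from `i` to a `≺`-smaller position contains something `≼` the global parent. -/
lemma GP_spec (S : Fin n → α) (i : Fin n) :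
    (∀ k ∈ Set.uIcc i (GP S i), key S (GP S i) ≤ key S k) ∧
    ∀ j, key S j < key S i → GP S i ≠ i ∧ ∃ k ∈ Set.uIcc i j, key S k ≤ key S (GP S i) := by
  unfold GP
  split_ifs with h
  · have hj := h.choose_spec
    set j := h.choose
    obtain ⟨hij, hpc⟩ := hj
    obtain ⟨h1, h2⟩ := (PC_eq_iff S hij).mp hpc
    constructor
    · intro k hk
      rw [Set.uIcc_of_le hij.le] at hk
      rcases hk.2.eq_or_lt with rfl | hlt
      · exact le_rfl
      · exact (h1 k hk.1 hlt).le
    · intro j' hj'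
      refine ⟨hij.ne', ?_⟩
      rcases lt_or_ge j' j with hlt | hge
      · have hn : ¬ ∀ l, j' ≤ l → l < j → key S j < key S l :=
          fun hq => absurd (h2 j' hlt hq) (not_le.mpr hj')
        push Not at hn
        obtain ⟨l, hl1, hl2, hl3⟩ := hn
        have hli : l < i := not_le.mp fun hle => absurd (h1 l hle hl2) (not_lt.mpr hl3)
        exact ⟨l, Set.mem_uIcc.mpr (Or.inr ⟨hl1, hli.le⟩), hl3⟩
      · exact ⟨j, Set.mem_uIcc.mpr (Or.inl ⟨hij.le, hge⟩), le_rfl⟩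
  · constructor
    · intro k hk
      rcases PP_spec S i with ⟨h1, -⟩ | ⟨h1, h2, h3⟩
      · rw [h1, Set.uIcc_self] at hk
        rw [h1, hk]
      · rw [Set.uIcc_of_ge h1.le] at hk
        rcases hk.1.eq_or_lt with e | hlt
        · rw [← e]
        · rcases hk.2.eq_or_lt with rfl | hlt'
          · exact h2.le
          · exact (h2.trans (h3 k hlt hlt')).le
    · intro j' hj'
      rcases lt_or_ge j' i with hlt | hge
      · rcases PP_spec S i with ⟨-, h1⟩ | ⟨h1, h2, h3⟩
        · exact absurd (h1 j' hlt) (lt_asymm hj')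
        · refine ⟨h1.ne, PP S i, Set.mem_uIcc.mpr (Or.inr ⟨?_, h1.le⟩), le_rfl⟩
          exact not_lt.mp fun hn => lt_asymm hj' (h3 j' hn hlt)
      · have hlt : i < j' := lt_of_le_of_ne hge (by rintro rfl; exact lt_irrefl _ hj')
        by_contra hcon
        push Not at hcon
        -- `j` is the first position after `i` that is `≺`-smaller; it would have prefix child `i`
        obtain ⟨j, ⟨hij, hji⟩, hmin⟩ := WellFounded.has_min (wellFounded_lt (α := Fin n))
          {j | i < j ∧ key S j < key S i} ⟨j', hlt, hj'⟩
        have hjj' : j ≤ j' := not_lt.mp fun hn => hmin j' ⟨hlt, hj'⟩ hn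
        have hbetween : ∀ l, i ≤ l → l < j → key S i ≤ key S l := by
          intro l hil hlj
          rcases hil.eq_or_lt with rfl | hil
          · exact le_rfl
          · exact not_lt.mp fun hn => hmin l ⟨hil, hn⟩ hlj
        refine h ⟨j, hij, (PC_eq_iff S hij).mpr
          ⟨fun l hil hlj => hji.trans_le (hbetween l hil hlj), fun k hkj hq => ?_⟩⟩
        rcases lt_or_ge k i with hki | hik
        · rcases PP_spec S i with ⟨-, h1⟩ | ⟨h1, h2, h3⟩
          · exact (h1 k hki).le
          · by_contra! hk
            have hkp : k ≤ PP S i := not_lt.mp fun hn => lt_asymm hk (h3 k hn hki)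
            exact lt_asymm (hq _ hkp (h1.trans hij))
              (hcon h1.ne j (Set.mem_uIcc.mpr (Or.inl ⟨hij.le, hjj'⟩)))
        · exact hbetween k hik hkj

lemma CTAux_of_nonempty (S : Fin n → α) (F : Finset (Fin n)) (h : F.Nonempty) :
    CTAux S F = PosTree.node (minPos S F h)
      (CTAux S (F.filter (fun j => j < minPos S F h)))
      (CTAux S (F.filter (fun j => minPos S F h < j))) := by
  rw [CTAux, dif_pos h]

lemma CTAux_of_not_nonempty (S : Fin n → α) (F : Finset (Fin n)) (h : ¬ F.Nonempty) :
    CTAux S F = PosTree.nil := by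
  rw [CTAux, dif_neg h]

/-- The Cartesian tree determines every comparison between a position `b` and a position `a` that
is the `≺`-minimum of the segment from `b` to `a`. -/
lemma key_le_of_CTAux_eq (P S : Fin n → α) (F : Finset (Fin n)) (hF : CTAux P F = CTAux S F)
    (a b : Fin n) (ha : a ∈ F) (hb : b ∈ F)
    (hab : ∀ k ∈ Set.uIcc b a, key P a ≤ key P k) : key S a ≤ key S b := by
  induction hc : F.card using Nat.strong_induction_on generalizing F with
  | _ c ih =>
    subst hc
    have hne : F.Nonempty := ⟨a, ha⟩
    rw [CTAux_of_nonempty P F hne, CTAux_of_nonempty S F hne] at hF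
    injection hF with hr hL hR
    have hmem := minPos_mem P F hne
    have hleP : ∀ k ∈ F, _ := fun k hk => minPos_le P F hne hk
    have hleS : ∀ k ∈ F, _ := fun k hk => minPos_le S F hne hk
    rw [← hr] at hL hR hleS
    generalize minPos P F hne = r at *
    by_cases hmid : r ∈ Set.uIcc b a
    · have : a = r := (key_inj P).mp (le_antisymm (hab r hmid) (hleP a ha))
      exact this ▸ hleS b hb
    · have hsub : ∀ p : Fin n → Prop, ∀ [DecidablePred p], ¬ p r → (F.filter p).card < F.card :=
        fun p _ hp => Finset.card_lt_card (Finset.filter_ssubset.mpr ⟨r, hmem, hp⟩)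
      simp only [Set.mem_uIcc, not_or, not_and, not_le] at hmid
      rcases lt_trichotomy a r with h | h | h
      · have hbr : b < r := not_le.mp fun hn => absurd (hmid.2 h.le) (not_lt.mpr hn)
        exact ih _ (hsub (· < r) (lt_irrefl r)) _ hL (by simp [ha, h]) (by simp [hb, hbr]) rfl
      · exact h ▸ hleS b hb
      · have hbr : r < b := not_le.mp fun hn => absurd (hmid.1 hn) (not_lt.mpr h.le)
        exact ih _ (hsub (r < ·) (lt_irrefl r)) _ hR (by simp [ha, h]) (by simp [hb, hbr]) rfl

/-- If `S` respects the parent relation of `P`, the Cartesian trees agree on each interval `F` that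
contains the global parent in `P` of each of its non-minimal positions. The intervals carrying
subtrees of `CT P` satisfy this condition, whereas other intervals need not. -/
lemma CTAux_eq_of_GP (P S : Fin n → α) (hGP : ∀ i, key S (GP P i) ≤ key S i)
    (F : Finset (Fin n)) (hconn : (F : Set (Fin n)).OrdConnected)
    (hcl : ∀ i ∈ F, (∃ r ∈ F, key P r < key P i) → GP P i ∈ F) : CTAux P F = CTAux S F := by
  induction hc : F.card using Nat.strong_induction_on generalizing F with
  | _ c ih =>
    subst hc
    by_cases hne : F.Nonempty
    swap
    · rw [CTAux_of_not_nonempty P F hne, CTAux_of_not_nonempty S F hne]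
    have hmem := minPos_mem P F hne
    have hleP : ∀ k ∈ F, _ := fun k hk => minPos_le P F hne hk
    -- otherwise the global parent in `P` of the `S`-minimum of `F` would be `S`-smaller still
    have hr : minPos S F hne = minPos P F hne := by
      have hs := minPos_mem S F hne
      by_contra hcon
      have hlt := lt_of_le_of_ne (hleP _ hs) fun e => hcon ((key_inj P).mp e).symm
      have hle := minPos_le S F hne (hcl _ hs ⟨_, hmem, hlt⟩)
      exact ((GP_spec P _).2 _ hlt).1 ((key_inj S).mp (le_antisymm (hGP _) hle))
    rw [CTAux_of_nonempty P F hne, CTAux_of_nonempty S F hne, hr]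
    generalize minPos P F hne = r at *
    have hsub : ∀ p : Fin n → Prop, ∀ [DecidablePred p], ¬ p r → (F.filter p).card < F.card :=
      fun p _ hp => Finset.card_lt_card (Finset.filter_ssubset.mpr ⟨r, hmem, hp⟩)
    -- the edge from a non-root node of a child subtree to its global parent cannot reach `r`
    have hcross : ∀ i ∈ F, (∃ r' ∈ F, key P r' < key P i ∧ r ∉ Set.uIcc i r') →
        GP P i ∈ F ∧ r ∉ Set.uIcc i (GP P i) := by
      rintro i hi ⟨r', hr', hlt, hnot⟩
      obtain ⟨h1, h2⟩ := GP_spec P i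
      refine ⟨hcl i hi ⟨r', hr', hlt⟩, fun hmid => ?_⟩
      obtain ⟨-, k, hk, hkg⟩ := h2 r' hlt
      have hkF : k ∈ F := hconn.uIcc_subset hi hr' hk
      have hkr : k = r := (key_inj P).mp (le_antisymm (hkg.trans (h1 r hmid)) (hleP k hkF))
      exact hnot (hkr ▸ hk)
    congr 1
    · refine ih _ (hsub (· < r) (lt_irrefl r)) _ ?_ ?_ rfl
      · have := hconn.inter (Set.ordConnected_Iio (a := r))
        simpa [Finset.coe_filter, Set.inter_def, Set.Iio] using this
      · rintro i hi ⟨r', hr', hlt⟩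
        simp only [Finset.mem_filter] at hi hr' ⊢
        obtain ⟨h1, h2⟩ := hcross i hi.1 ⟨r', hr'.1, hlt, fun hm => by
          rcases Set.mem_uIcc.mp hm with h | h
          · exact absurd h.2 (not_le.mpr hr'.2)
          · exact absurd h.2 (not_le.mpr hi.2)⟩
        exact ⟨h1, not_le.mp fun hn => h2 (Set.mem_uIcc.mpr (Or.inl ⟨hi.2.le, hn⟩))⟩
    · refine ih _ (hsub (r < ·) (lt_irrefl r)) _ ?_ ?_ rfl
      · have := hconn.inter (Set.ordConnected_Ioi (a := r))
        simpa [Finset.coe_filter, Set.inter_def, Set.Ioi] using this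
      · rintro i hi ⟨r', hr', hlt⟩
        simp only [Finset.mem_filter] at hi hr' ⊢
        obtain ⟨h1, h2⟩ := hcross i hi.1 ⟨r', hr'.1, hlt, fun hm => by
          rcases Set.mem_uIcc.mp hm with h | h
          · exact absurd h.1 (not_le.mpr hi.2)
          · exact absurd h.1 (not_le.mpr hr'.2)⟩
        exact ⟨h1, not_le.mp fun hn => h2 (Set.mem_uIcc.mpr (Or.inr ⟨hn, hi.2.le⟩))⟩

/-- **Theorem 3 of the paper.**  Two strings `P[1..m]` and `S[1..m]` have the same
Cartesian trees iff `S[GP_P(i)] ⪯ S[i]` for all `1 ≤ i ≤ m`. -/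
theorem global_parent_verification (m : ℕ) (P S : Fin m → α) :
    CT P = CT S ↔ ∀ i : Fin m, preceq S (GP P i) i := by
  simp only [preceq_iff]
  constructor
  · intro h i
    exact key_le_of_CTAux_eq P S Finset.univ h _ i (Finset.mem_univ _) (Finset.mem_univ _)
      (GP_spec P i).1
  · intro h
    exact CTAux_eq_of_GP P S h Finset.univ (by simpa using Set.ordConnected_univ)
      (fun i _ _ => Finset.mem_univ _)

end CTM
end

section
/- Let P[1..m] and S[1..m] be strings over a linearly ordered alphabet. Then PP_P(i) = PP_S(i) for all 1 ≤ i ≤ m if and only if S[PP_P(i)] ⪯ S[i] and S[i] ⪯ S[PC_P(i)] for all 1 ≤ i ≤ m. (Obtained by iterating Theorem 1 over q = 0, …, m−1.) -/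
/-!
For a position `i` of `P`, let `R(i)` be the set of positions `j < i` to the right of the
prefix-parent of `i` (all `j < i` when `i` has none). Then `PP P i` is characterized by two
conditions: the parent precedes `i`, and `i` precedes every element of `R(i)`
(`PP_prec`, `prec_of_PPgap`, `PP_unique`). The prefix-child `PC P i` is the minimum of `R(i)`
in the order of `P` (`PC_spec`), so the condition `S[i] ⪯ S[PC P i]` says that `i` precedes,
in `S`, the `P`-minimum of `R(i)`.

If the prefix-parents agree everywhere, the conditions on `S` hold because `PC P i` lies in
`R(i)`. For the converse, one inducts on `i`: when the prefix-parents agree below `i`, the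
`P`-minimum of a suffix of `[0, i)` is also its `S`-minimum (`min_transfer`). Applied to
`R(i)`, this turns `S[i] ⪯ S[PC P i]` into the statement that `i` precedes all of `R(i)` in
`S`, which identifies `PP S i` with `PP P i`.
-/

namespace CTM

variable {α : Type*} [LinearOrder α] {n : ℕ}

lemma prec_trans {S : Fin n → α} {i j k : Fin n} (h : prec S i j) (h' : prec S j k) :
    prec S i k := by
  unfold prec at *
  grind

lemma prec_asymm {S : Fin n → α} {i j : Fin n} (h : prec S i j) : ¬ prec S j i := by
  unfold prec at *
  grind

lemma prec_total {S : Fin n → α} {i j : Fin n} (h : ¬ prec S i j) (hne : i ≠ j) :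
    prec S j i := by
  unfold prec at *
  grind

/-- The positions strictly between the prefix-parent of `i` and `i`, or all positions before
`i` when `i` has no prefix-parent (encoded as `PP S i = i`). -/
def PPgap (S : Fin n → α) (i j : Fin n) : Prop :=
  j < i ∧ (PP S i < j ∨ PP S i = i)

lemma PP_prec (S : Fin n → α) (i : Fin n) : PP S i = i ∨ prec S (PP S i) i := by
  unfold PP
  split
  · next h =>
    have hm := (PPset S i).max'_mem h
    simp only [PPset, Finset.mem_filter] at hm
    exact Or.inr hm.2.2
  · exact Or.inl rfl

lemma prec_of_PPgap {S : Fin n → α} {i j : Fin n} (h : PPgap S i j) : prec S i j := by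
  obtain ⟨hj, h⟩ := h
  by_contra hc
  have hji : prec S j i := prec_total hc hj.ne'
  have hmem : j ∈ PPset S i := by simp [PPset, hj, hji]
  have hne : (PPset S i).Nonempty := ⟨j, hmem⟩
  have hle : j ≤ PP S i := by
    unfold PP
    rw [dif_pos hne]
    exact Finset.le_max' _ _ hmem
  rcases h with h | h
  · exact absurd h (not_lt.mpr hle)
  · have hm := (PPset S i).max'_mem hne
    unfold PP at h
    rw [dif_pos hne] at h
    rw [h] at hm
    simp [PPset] at hm

lemma PP_unique {S : Fin n → α} {i p : Fin n} (hle : p ≤ i) (hp : p = i ∨ prec S p i)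
    (hgap : ∀ j, j < i → (p < j ∨ p = i) → prec S i j) : PP S i = p := by
  have hq := PP_prec S i
  have hqle := PP_le S i
  have hqgap : ∀ j, j < i → (PP S i < j ∨ PP S i = i) → prec S i j :=
    fun j h h' => prec_of_PPgap ⟨h, h'⟩
  rcases lt_trichotomy (PP S i) p with h | h | h
  · rcases hp with rfl | hp
    · exact absurd (hgap _ h (Or.inr rfl)) (prec_asymm (hq.resolve_left h.ne))
    · have hpi : p ≠ i := by rintro rfl; exact prec_asymm hp hp
      exact absurd (hqgap p (lt_of_le_of_ne hle hpi) (Or.inl h)) (prec_asymm hp)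
  · exact h
  · rcases hq with hq | hq
    · have hpi : p ≠ i := (h.trans_le hqle).ne
      exact absurd (hqgap p (h.trans_le hqle) (Or.inr hq)) (prec_asymm (hp.resolve_left hpi))
    · have hqi : PP S i ≠ i := fun e => by rw [e] at hq; exact prec_asymm hq hq
      exact absurd (hgap _ (lt_of_le_of_ne hqle hqi) (Or.inl h)) (prec_asymm hq)

lemma minPos_preceq (S : Fin n → α) (F : Finset (Fin n)) (h : F.Nonempty) (j : Fin n)
    (hj : j ∈ F) : preceq S (minPos S F h) j := by
  have hle := (F.exists_min_image (fun j => toLex (S j, j)) h).choose_spec.2 j hj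
  change toLex (S (minPos S F h), minPos S F h) ≤ toLex (S j, j) at hle
  rw [Prod.Lex.toLex_le_toLex] at hle
  unfold preceq prec
  rcases hle with hle | ⟨h1, h2⟩
  · exact Or.inr (Or.inl hle)
  · rcases eq_or_lt_of_le h2 with h2 | h2
    · exact Or.inl h2
    · exact Or.inr (Or.inr ⟨h1, h2⟩)

/-- `PC S i` is the ≺-minimum of the gap below `i`, or `i` itself when the gap is empty. -/
lemma PC_spec (S : Fin n → α) (i : Fin n) :
    (PC S i = i ∧ ∀ j, ¬ PPgap S i j) ∨
      (PPgap S i (PC S i) ∧ ∀ j, PPgap S i j → preceq S (PC S i) j) := by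
  unfold PC
  split_ifs with h0 h1 h2
  · left
    refine ⟨rfl, fun j hj => ?_⟩
    have := Fin.lt_def.mp hj.1
    omega
  · right
    have hm := fun h => (Finset.mem_filter.mp
      (minPos_mem S (Finset.univ.filter (fun j => j < i)) h)).2
    refine ⟨⟨hm _, Or.inr h1⟩, fun j hj => ?_⟩
    exact minPos_preceq S _ _ j (by simpa using hj.1)
  · left
    refine ⟨rfl, fun j hj => ?_⟩
    have h3 := Fin.lt_def.mp hj.1
    have h4 := Fin.lt_def.mp (hj.2.resolve_right h1)
    omega
  · right
    have hm := fun h => (Finset.mem_filter.mp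
      (minPos_mem S (Finset.univ.filter (fun j => PP S i < j ∧ j < i)) h)).2
    refine ⟨⟨(hm _).2, Or.inl (hm _).1⟩, fun j hj => ?_⟩
    exact minPos_preceq S _ _ j (by simpa using ⟨hj.2.resolve_right h1, hj.1⟩)

/-- When prefix-parents agree below `i`, the `P`-minimum `k` of a suffix `A` of `[0, i)` is
also its `S`-minimum. Elements of `A` before `k` lie in the gap below `k`; for an element of
`A` after `k`, the chain of prefix-parents descends to `k`. -/
lemma min_transfer {P S : Fin n → α} {i k : Fin n} (A : Fin n → Prop)
    (hPP : ∀ j, j < i → PP P j = PP S j) (hlt : ∀ j, A j → j < i)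
    (hup : ∀ j j', A j → j ≤ j' → j' < i → A j') (hk : A k)
    (hmin : ∀ j, A j → preceq P k j) (j : Fin n) (hj : A j) : preceq S k j := by
  have hki := hlt k hk
  induction j using WellFoundedLT.induction with
  | ind j ih =>
    have hji := hlt j hj
    rcases lt_trichotomy j k with h | h | h
    · refine Or.inr (prec_of_PPgap ⟨h, ?_⟩)
      rw [← hPP k hki]
      rcases PP_prec P k with hp | hp
      · exact Or.inr hp
      · left
        by_contra hc
        have hA := hup j _ hj (not_lt.mp hc) ((PP_le P k).trans_lt hki)
        rcases hmin _ hA with he | hl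
        · rw [← he] at hp
          exact prec_asymm hp hp
        · exact prec_asymm hp hl
    · exact Or.inl h.symm
    · have hkj : prec P k j := (hmin j hj).resolve_left h.ne
      have hng : ¬ PPgap P j k := fun hg => prec_asymm hkj (prec_of_PPgap hg)
      simp only [PPgap, not_and, not_or, not_lt] at hng
      obtain ⟨h1, h2⟩ := hng h
      rw [hPP j hji] at h1 h2
      have hqj : PP S j < j := lt_of_le_of_ne (PP_le S j) h2
      have hp := (PP_prec S j).resolve_left h2
      rcases ih _ hqj (hup k _ hk h1 (hqj.trans hji)) with he | hl
      · rw [← he] at hp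
        exact Or.inr hp
      · exact Or.inr (prec_trans hl hp)

/-- Iterating Theorem 1: `P` and `S` have the same prefix-parent representations iff
`S[PP_P(i)] ⪯ S[i] ⪯ S[PC_P(i)]` for all `1 ≤ i ≤ m`. -/
theorem pp_eq_iff_pp_pc (m : ℕ) (P S : Fin m → α) :
    (∀ i : Fin m, PP P i = PP S i) ↔
      (∀ i : Fin m, preceq S (PP P i) i ∧ preceq S i (PC P i)) := by
  constructor
  · intro h i
    refine ⟨by rw [h i]; exact PP_prec S i, ?_⟩
    rcases PC_spec P i with ⟨he, _⟩ | ⟨hg, _⟩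
    · exact Or.inl he.symm
    · refine Or.inr (prec_of_PPgap ?_)
      unfold PPgap at hg ⊢
      rwa [h i] at hg
  · intro h i
    induction i using WellFoundedLT.induction with
    | ind i ih =>
      refine (PP_unique (PP_le P i) (h i).1 fun j hj hj' => ?_).symm
      have hg : PPgap P i j := ⟨hj, hj'⟩
      rcases PC_spec P i with ⟨_, hno⟩ | ⟨hc, hmin⟩
      · exact absurd hg (hno j)
      · have hup : ∀ a b, PPgap P i a → a ≤ b → b < i → PPgap P i b :=
          fun a b ha hab hb => ⟨hb, ha.2.imp_left fun hl => hl.trans_le hab⟩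
        have hic := (h i).2.resolve_left hc.1.ne'
        rcases min_transfer (PPgap P i) ih (fun _ ha => ha.1) hup hc hmin j hg with he | hl
        · rwa [he] at hic
        · exact prec_trans hic hl

end CTM
end
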